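/- Let N ≥ 3 be an odd integer, m = (N−1)/2, ζ = exp(2πi/N), and let S, T be the N×N matrices with entries S_i^j = N^{−1/2} ζ^{ij} and T_i^j = ζ^{(m+1)i²} δ_N(i+j). Then for all i, j ∈ {0,…,N−1}, ((ST)²)_i^j = φ_N · N^{−1/2} · ζ^{−(m+1)i² − ij}, where φ_N = ((m+1)/N) if N ≡ 1 mod 4 and φ_N = ((m+1)/N)·i if N ≡ 3 mod 4. Equivalently, the Gauss sum Σ_{k=0}^{N−1} ζ^{−k(i+j)+(m+1)(k²+j²)} equals φ_N √N ζ^{(m+1)(j²−(i+j)²)}. -/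

import Mathlib

/-!
Completing the square (`2 (m + 1) ≡ 1 mod N`) reduces both claims to
`∑ₖ ζ^((m+1) k²) = φ √N`; the matrix entry is `1/N` times the Gauss sum because each row of `T`
has a single nonzero entry.

That sum is evaluated, sign included, by Gauss's own method. For every `q`, the alternating sum of
Gaussian binomials satisfies `∑ₖ (-1)ᵏ [2m, k]_q = ∏_{j<m} (1 - q^(2j+1))` (`rogersSzego_neg_one`).
At `q = ζ⁻¹` absorption gives `(-1)ᵏ [N-1, k]_q = ζ^(k(k+1)/2)`, so the left side is the Gauss sum
up to the shift `k ↦ k + (m + 1)` and a power of `ζ`. On the right, half-angle factorisation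
produces an explicit phase times `∏ 2 sin (π (2j+1) / N)`, a positive number whose square is
`∏_{0<k<N} |1 - ζᵏ| = N`. The result is `(-i)^m √N` (`gauss_sum_half`), and
`(-i)^m = φ` because `((m+1)/N) = (2/N)` depends only on `N mod 8` (`phase_eq`).
-/

/-! ### Gaussian binomials and Gauss's product identity -/

/-- The Gaussian binomial coefficient `[n choose k]_q`, defined by the `q`-Pascal rule
`[n+1, k+1] = [n, k] + q^(k+1) [n, k+1]`, so that it makes sense for every `q`, roots of unity
included. -/
def qBinom (q : ℂ) : ℕ → ℕ → ℂ
  | _, 0 => 1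
  | 0, _ + 1 => 0
  | n + 1, k + 1 => qBinom q n k + q ^ (k + 1) * qBinom q n (k + 1)

lemma qBinom_zero_right (q : ℂ) (n : ℕ) : qBinom q n 0 = 1 := by
  cases n <;> simp [qBinom]

lemma qBinom_succ_succ (q : ℂ) (n k : ℕ) :
    qBinom q (n + 1) (k + 1) = qBinom q n k + q ^ (k + 1) * qBinom q n (k + 1) := by
  simp [qBinom]

lemma qBinom_eq_zero (q : ℂ) : ∀ n k : ℕ, n < k → qBinom q n k = 0
  | _, 0, h => by omega
  | 0, _ + 1, _ => by simp [qBinom]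
  | n + 1, k + 1, h => by
    rw [qBinom_succ_succ, qBinom_eq_zero q n k (by omega), qBinom_eq_zero q n (k + 1) (by omega)]
    simp

/-- The absorption identity, which makes `[N, k]_q` vanish for `0 < k < N` when `q` is a primitive
`N`-th root of unity. -/
lemma qBinom_absorb (q : ℂ) (n : ℕ) : ∀ k : ℕ,
    (1 - q ^ (k + 1)) * qBinom q (n + 1) (k + 1) = (1 - q ^ (n + 1)) * qBinom q n k := by
  induction n with
  | zero =>
    intro k
    cases k with
    | zero => simp [qBinom]
    | succ k => simp [qBinom]
  | succ n ih =>
    intro k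
    cases k with
    | zero =>
      have h := ih 0
      rw [qBinom_zero_right] at h ⊢
      rw [qBinom_succ_succ, qBinom_zero_right]
      linear_combination q * h
    | succ k =>
      have h1 := ih (k + 1)
      have h2 := ih k
      have h3 := qBinom_succ_succ q n k
      rw [qBinom_succ_succ q (n + 1) (k + 1)]
      linear_combination q ^ (k + 2) * h1 + q * h2 - q * (1 - q ^ (n + 1)) * h3

/-- The Rogers–Szegő polynomial `∑ₖ [n, k]_q xᵏ`. -/
def rogersSzego (q : ℂ) (n : ℕ) (x : ℂ) : ℂ :=
  ∑ k ∈ Finset.range (n + 1), qBinom q n k * x ^ k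

lemma rogersSzego_succ (q : ℂ) (n : ℕ) (x : ℂ) :
    rogersSzego q (n + 1) x = x * rogersSzego q n x + rogersSzego q n (q * x) := by
  have h : rogersSzego q n (q * x)
      = ∑ k ∈ Finset.range (n + 1), qBinom q n (k + 1) * (q * x) ^ (k + 1) + 1 := by
    have := Finset.sum_range_succ' (fun k => qBinom q n k * (q * x) ^ k) (n + 1)
    rw [Finset.sum_range_succ, qBinom_eq_zero q n (n + 1) (by omega), qBinom_zero_right] at this
    simpa [rogersSzego] using this
  rw [h]
  unfold rogersSzego
  rw [Finset.sum_range_succ' _ (n + 1), qBinom_zero_right, Finset.mul_sum, ← add_assoc,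
    ← Finset.sum_add_distrib]
  congr 1
  · refine Finset.sum_congr rfl fun k _ => ?_
    rw [qBinom_succ_succ]
    ring
  · simp

/-- The `q`-difference equation. At `x = -1` it turns the recursion `rogersSzego_succ` into a
two-step recursion for the values at `-1` alone. -/
lemma rogersSzego_sub (q : ℂ) (n : ℕ) : ∀ x : ℂ,
    rogersSzego q (n + 1) x - rogersSzego q (n + 1) (q * x)
      = (1 - q ^ (n + 1)) * x * rogersSzego q n x := by
  induction n with
  | zero =>
    intro x
    simp [rogersSzego, Finset.sum_range_succ, qBinom]
    ring
  | succ n ih =>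
    intro x
    have h1 := ih x
    have h2 := ih (q * x)
    have h3 := rogersSzego_succ q n x
    rw [rogersSzego_succ q (n + 1) x, rogersSzego_succ q (n + 1) (q * x)]
    linear_combination q * x * h1 + h2 - (1 - q ^ (n + 1)) * x * q * h3

/-- Gauss's identity `∑ₖ (-1)ᵏ [2m, k]_q = (1 - q)(1 - q³)⋯(1 - q^(2m-1))`. -/
lemma rogersSzego_neg_one (q : ℂ) (m : ℕ) :
    rogersSzego q (2 * m) (-1) = ∏ j ∈ Finset.range m, (1 - q ^ (2 * j + 1)) := by
  induction m with
  | zero => simp [rogersSzego, qBinom]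
  | succ m ih =>
    have h1 := rogersSzego_sub q (2 * m) (-1)
    have h2 := rogersSzego_succ q (2 * m + 1) (-1)
    rw [Finset.prod_range_succ, ← ih, show 2 * (m + 1) = 2 * m + 1 + 1 by ring, h2]
    linear_combination -h1

/-- At a primitive root of unity of order `N + 1`, the row `[N, k]_q` has consecutive ratios
`-q^(-(k+1))`: the `q`-Pascal sum of two neighbours is `[N+1, k+1]_q = 0`. -/
lemma qBinom_pred {q : ℂ} {N : ℕ} (hq : IsPrimitiveRoot q (N + 1)) (k : ℕ) (hk : k < N) :
    qBinom q N k + q ^ (k + 1) * qBinom q N (k + 1) = 0 := by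
  have h := qBinom_absorb q N k
  rw [hq.pow_eq_one, sub_self, zero_mul] at h
  rw [← qBinom_succ_succ]
  refine (mul_eq_zero.mp h).resolve_left fun h0 => ?_
  have := (hq.pow_eq_one_iff_dvd (k + 1)).mp (sub_eq_zero.mp h0).symm
  exact absurd (Nat.le_of_dvd (by omega) this) (by omega)

/-! ### Periodic sums and the product of sines -/

/-- Summing a function of period `N` over any `N` consecutive integers gives the same value. -/
lemma sum_range_shift {N : ℕ} (g : ℕ → ℂ) (hg : ∀ k, g (k + N) = g k) (a : ℕ) :
    ∑ k ∈ Finset.range N, g (k + a) = ∑ k ∈ Finset.range N, g k := by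
  induction a with
  | zero => simp
  | succ a ih =>
    rw [← ih]
    have h1 := Finset.sum_range_succ (fun k => g (k + a)) N
    have h2 := Finset.sum_range_succ' (fun k => g (k + a)) N
    have h3 : g (N + a) = g (0 + a) := by rw [add_comm N a, hg, zero_add]
    simp only [h3] at h1
    have h4 : ∀ k, g (k + (a + 1)) = g (k + 1 + a) := fun k => by congr 1; ring
    simp only [h4]
    exact add_right_cancel (h2.symm.trans h1)

/-- The half-angle factorisation of `1 - q^a` for `q = exp(-2πi/N)`. -/
lemma one_sub_pow_eq (N : ℕ) (a : ℕ) (w : ℂ)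
    (hw : w = Complex.exp (-(Real.pi * Complex.I / N))) :
    1 - (w ^ 2) ^ a = w ^ a * Complex.I * ((2 * Real.sin (Real.pi * a / N) : ℝ) : ℂ) := by
  have e : w ^ a = Complex.exp (-(((Real.pi * a / N : ℝ) : ℂ)) * Complex.I) := by
    rw [hw, ← Complex.exp_nat_mul]
    congr 1
    push_cast
    ring
  rw [← pow_mul, mul_comm 2 a, pow_mul, e]
  push_cast
  rw [Complex.two_sin]
  generalize (Real.pi : ℂ) * a / N = x
  have h : Complex.exp (-x * Complex.I) * Complex.exp (x * Complex.I) = 1 := by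
    rw [← Complex.exp_add]
    simp
  linear_combination (Complex.exp (-x * Complex.I) ^ 2
    - Complex.exp (-x * Complex.I) * Complex.exp (x * Complex.I)) * Complex.I_sq.symm - h

lemma prod_range_two_mul (f : ℕ → ℝ) (m : ℕ) :
    ∏ i ∈ Finset.range (2 * m), f i
      = (∏ j ∈ Finset.range m, f (2 * j)) * ∏ j ∈ Finset.range m, f (2 * j + 1) := by
  induction m with
  | zero => simp
  | succ m ih =>
    rw [show 2 * (m + 1) = 2 * m + 1 + 1 by ring, Finset.prod_range_succ, Finset.prod_range_succ,
      ih, Finset.prod_range_succ, Finset.prod_range_succ]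
    ring

/-- The sines at odd multiples of `π / N` have product `√N` after doubling: reflection
`k ↦ N - k` swaps odd and even `k`, and the product over all `0 < k < N` is `|∏ (1 - ζᵏ)| = N`. -/
lemma prod_sin (m : ℕ) :
    ∏ j ∈ Finset.range m, (2 * Real.sin (Real.pi * ((2 * j + 1 : ℕ) : ℝ) / ((2 * m + 1 : ℕ) : ℝ)))
      = Real.sqrt ((2 * m + 1 : ℕ) : ℝ) := by
  set N := 2 * m + 1 with hN
  have hN0 : (0 : ℝ) < (N : ℝ) := by positivity
  set f : ℕ → ℝ := fun i => 2 * Real.sin (Real.pi * ((i + 1 : ℕ) : ℝ) / (N : ℝ)) with hf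
  have hpos : ∀ i < 2 * m, 0 < f i := by
    intro i hi
    have : ((i + 1 : ℕ) : ℝ) < N := by exact_mod_cast (by omega : i + 1 < N)
    refine mul_pos two_pos (Real.sin_pos_of_pos_of_lt_pi (by positivity) ?_)
    rw [div_lt_iff₀ hN0]
    exact mul_lt_mul_of_pos_left this Real.pi_pos
  have hall : ∏ i ∈ Finset.range (2 * m), f i = N := by
    set w := Complex.exp (-(Real.pi * Complex.I / N)) with hw
    have hq : IsPrimitiveRoot (w ^ 2) (2 * m + 1) := by
      have := (Complex.isPrimitiveRoot_exp N (by omega)).inv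
      rw [← Complex.exp_neg] at this
      have e : w ^ 2 = Complex.exp (-(2 * Real.pi * Complex.I / N)) := by
        rw [hw, ← Complex.exp_nat_mul]
        congr 1
        push_cast
        ring
      rw [e]
      exact this
    have hnw : ‖w‖ = 1 := by
      rw [hw, show -(Real.pi * Complex.I / (N : ℂ)) = ((-(Real.pi / N) : ℝ) : ℂ) * Complex.I by
        push_cast; ring]
      exact Complex.norm_exp_ofReal_mul_I _
    have h := congrArg norm hq.prod_one_sub_pow_eq_order
    rw [norm_prod] at h
    have h2 : ‖(((2 * m : ℕ) : ℂ) + 1)‖ = N := by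
      rw [show (((2 * m : ℕ) : ℂ) + 1) = ((N : ℕ) : ℂ) by rw [hN]; push_cast; ring]
      exact Complex.norm_natCast N
    rw [h2] at h
    rw [← h]
    refine Finset.prod_congr rfl fun i hi => ?_
    rw [one_sub_pow_eq N (i + 1) w hw, norm_mul, norm_mul, norm_pow, hnw, Complex.norm_I,
      Complex.norm_real, Real.norm_of_nonneg (hpos i (Finset.mem_range.mp hi)).le]
    simp [hf]
  have hrefl : ∏ j ∈ Finset.range m, f (2 * j + 1) = ∏ j ∈ Finset.range m, f (2 * j) := by
    rw [← Finset.prod_range_reflect]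
    refine Finset.prod_congr rfl fun j hj => ?_
    have hj := Finset.mem_range.mp hj
    simp only [hf]
    rw [← Real.sin_pi_sub]
    congr 2
    have : ((2 * (m - 1 - j) + 1 + 1 : ℕ) : ℝ) = N - ((2 * j + 1 : ℕ) : ℝ) := by
      rw [eq_sub_iff_add_eq]
      exact_mod_cast (by omega : 2 * (m - 1 - j) + 1 + 1 + (2 * j + 1) = N)
    rw [this]
    field_simp
    ring
  rw [prod_range_two_mul, hrefl] at hall
  change ∏ j ∈ Finset.range m, f (2 * j) = _
  rw [← hall, Real.sqrt_mul_self]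
  exact Finset.prod_nonneg fun j hj => (hpos _ (by have := Finset.mem_range.mp hj; omega)).le

/-! ### The quadratic Gauss sum and its phase -/

/-- The quadratic Gauss sum with coefficient `m + 1 = 1/2 mod N`, for `N = 2m + 1`. -/
lemma gauss_sum_half (m : ℕ) (ζ : ℂ)
    (hζ : ζ = Complex.exp (2 * Real.pi * Complex.I / ((2 * m + 1 : ℕ) : ℂ))) :
    ∑ k ∈ Finset.range (2 * m + 1), ζ ^ ((m + 1) * k ^ 2)
      = (-Complex.I) ^ m * ((Real.sqrt ((2 * m + 1 : ℕ) : ℝ) : ℝ) : ℂ) := by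
  set N := 2 * m + 1 with hN
  have hN0 : (N : ℂ) ≠ 0 := by exact_mod_cast (by omega : N ≠ 0)
  have hprim : IsPrimitiveRoot ζ N := hζ ▸ Complex.isPrimitiveRoot_exp N (by omega)
  have hz1 : ζ ^ N = 1 := hprim.pow_eq_one
  have hz0 : ζ ≠ 0 := hprim.ne_zero (by omega)
  set w := Complex.exp (-(Real.pi * Complex.I / N)) with hw
  set ω := Complex.exp (Real.pi * Complex.I / N) with hω
  have hωw : ω * w = 1 := by rw [hω, hw, ← Complex.exp_add]; simp
  have hω2 : ω ^ 2 = ζ := by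
    rw [hω, hζ, ← Complex.exp_nat_mul]
    congr 1
    push_cast
    ring
  have hωN : ω ^ N = -1 := by
    rw [hω, ← Complex.exp_nat_mul, mul_div_cancel₀ _ hN0, Complex.exp_pi_mul_I]
  have hqz : ζ * w ^ 2 = 1 := by rw [← hω2, ← mul_pow, hωw, one_pow]
  have hq : IsPrimitiveRoot (w ^ 2) (2 * m + 1) := by
    rw [eq_inv_of_mul_eq_one_right hqz]
    exact hprim.inv
  -- Both sides start at `ζ^((m+1)^3)` and are multiplied by `ζ^(k+1)` as `k` becomes `k + 1`.
  have hterm : ∀ k < N, ζ ^ ((m + 1) * (k + (m + 1)) ^ 2)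
      = ζ ^ ((m + 1) ^ 3) * (qBinom (w ^ 2) (2 * m) k * (-1) ^ k) := by
    intro k
    induction k with
    | zero => intro _; rw [qBinom_zero_right]; ring
    | succ k ih =>
      intro hk
      have h1 := qBinom_pred hq k (by omega)
      have h2 : ζ ^ (k + 1) * (w ^ 2) ^ (k + 1) = 1 := by rw [← mul_pow, hqz, one_pow]
      have h3 : ζ ^ ((m + 1) * (k + 1 + (m + 1)) ^ 2)
          = ζ ^ ((m + 1) * (k + (m + 1)) ^ 2) * ζ ^ (k + 1) := by
        rw [show (m + 1) * (k + 1 + (m + 1)) ^ 2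
          = (m + 1) * (k + (m + 1)) ^ 2 + (k + 1) + N * (k + 1 + (m + 1)) by rw [hN]; ring,
          pow_add, pow_mul ζ N, hz1, one_pow, mul_one, pow_add]
      rw [h3, ih (by omega)]
      linear_combination ζ ^ ((m + 1) ^ 3) * (-1) ^ k * (ζ ^ (k + 1) * h1
        - qBinom (w ^ 2) (2 * m) (k + 1) * h2)
  have hshift := sum_range_shift (N := N) (fun k => ζ ^ ((m + 1) * k ^ 2)) (fun k => by
    rw [show (m + 1) * (k + N) ^ 2 = (m + 1) * k ^ 2 + N * ((m + 1) * (2 * k + N)) by ring,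
      pow_add, pow_mul ζ N, hz1, one_pow, mul_one]) (m + 1)
  rw [← hshift, Finset.sum_congr rfl fun k hk => hterm k (Finset.mem_range.mp hk),
    ← Finset.mul_sum]
  have hG := rogersSzego_neg_one (w ^ 2) m
  unfold rogersSzego at hG
  rw [hN, hG, Finset.prod_congr rfl fun j _ => one_sub_pow_eq N (2 * j + 1) w hw,
    Finset.prod_mul_distrib, Finset.prod_mul_distrib, ← Complex.ofReal_prod, prod_sin,
    Finset.prod_const, Finset.card_range]
  have hodd : ∀ n : ℕ, ∏ j ∈ Finset.range n, w ^ (2 * j + 1) = w ^ (n ^ 2) := by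
    intro n
    induction n with
    | zero => simp
    | succ n ih => rw [Finset.prod_range_succ, ih]; ring
  have hphase : ζ ^ ((m + 1) ^ 3) * w ^ (m ^ 2) = (-1) ^ m := by
    have hpar : Even (m * (m + 1) + 2) := (Nat.even_mul_succ_self m).add even_two
    rw [← hω2, ← pow_mul, show 2 * (m + 1) ^ 3 = N * (m * (m + 1) + 2 + m) + m ^ 2 by rw [hN]; ring,
      pow_add, mul_assoc, ← mul_pow, hωw, one_pow, mul_one, pow_mul, hωN, pow_add, hpar.neg_one_pow,
      one_mul]
  rw [hodd, neg_pow Complex.I]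
  linear_combination Complex.I ^ m * ((Real.sqrt ((2 * m + 1 : ℕ) : ℝ) : ℝ) : ℂ) * hphase

/-- Since `2 (m + 1) ≡ 1 mod N`, the symbol `((m+1)/N)` is `(2/N)`, which the second supplementary
law determines from `N mod 8`. -/
lemma phase_eq (m : ℕ) :
    (if (2 * m + 1) % 4 = 1 then ((jacobiSym ((m : ℤ) + 1) (2 * m + 1) : ℤ) : ℂ)
      else ((jacobiSym ((m : ℤ) + 1) (2 * m + 1) : ℤ) : ℂ) * Complex.I) = (-Complex.I) ^ m := by
  have hJ : jacobiSym ((m : ℤ) + 1) (2 * m + 1)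
      = if (2 * m + 1) % 8 = 1 ∨ (2 * m + 1) % 8 = 7 then 1 else -1 := by
    have h1 : jacobiSym 2 (2 * m + 1) * jacobiSym ((m : ℤ) + 1) (2 * m + 1) = 1 := by
      rw [← jacobiSym.mul_left, show (2 : ℤ) * (m + 1) = 1 + ((2 * m + 1 : ℕ) : ℤ) * 1 by
        push_cast; ring, jacobiSym.mod_left, Int.add_mul_emod_self_left, ← jacobiSym.mod_left,
        jacobiSym.one_left]
    rw [jacobiSym.at_two ⟨m, rfl⟩, ZMod.χ₈_nat_eq_if_mod_eight, if_neg (by omega)] at h1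
    split_ifs at h1 ⊢ <;> linarith
  rw [hJ]
  obtain ⟨t, r, hr, rfl⟩ : ∃ t r, r < 4 ∧ m = 4 * t + r :=
    ⟨m / 4, m % 4, Nat.mod_lt _ (by norm_num), by omega⟩
  have hI : (-Complex.I) ^ (4 * t + r) = (-Complex.I) ^ r := by
    rw [pow_add, pow_mul, neg_pow, Complex.I_pow_four]
    norm_num
  rw [hI]
  interval_cases r
  · rw [if_pos (by omega), if_pos (by omega)]; simp
  · rw [if_neg (by omega), if_neg (by omega)]; simp
  · rw [if_pos (by omega), if_neg (by omega)]; simp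
  · rw [if_neg (by omega), if_pos (by omega)]
    simp [pow_succ]

/-- With `N`, `m`, `ζ`, `S`, `T`, `φ_N` as in the context, for all
`i, j ∈ {0,…,N-1}` one has `((ST)²) i j = φ_N · N^{-1/2} · ζ^{-(m+1)i² - ij}`;
equivalently, the Gauss sum `Σ_k ζ^{-k(i+j)+(m+1)(k²+j²)}` equals
`φ_N √N ζ^{(m+1)(j²-(i+j)²)}`. -/
theorem stmt4 (N : ℕ) (hNodd : Odd N) (hN3 : 3 ≤ N)
    (m : ℕ) (hm : m = (N - 1) / 2)
    (ζ : ℂ) (hζ : ζ = Complex.exp (2 * Real.pi * Complex.I / N))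
    (S T : Matrix (Fin N) (Fin N) ℂ)
    (hS : ∀ i j : Fin N, S i j = ((Real.sqrt N : ℂ))⁻¹ * ζ ^ (i.val * j.val))
    (hT : ∀ i j : Fin N, T i j =
      ζ ^ ((m + 1) * i.val ^ 2) * (if (i.val + j.val) % N = 0 then 1 else 0))
    (φ : ℂ)
    (hφ : φ = if N % 4 = 1 then ((jacobiSym ((m : ℤ) + 1) N : ℤ) : ℂ)
              else ((jacobiSym ((m : ℤ) + 1) N : ℤ) : ℂ) * Complex.I) :
    ∀ i j : Fin N,
      ((S * T) ^ 2) i j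
          = φ * ((Real.sqrt N : ℂ))⁻¹ *
              ζ ^ (-((((m : ℤ) + 1) * (i.val : ℤ) ^ 2 + (i.val : ℤ) * (j.val : ℤ)))) ∧
      (∑ k : Fin N,
          ζ ^ (-((k.val : ℤ) * ((i.val : ℤ) + (j.val : ℤ)))
                + ((m : ℤ) + 1) * ((k.val : ℤ) ^ 2 + (j.val : ℤ) ^ 2)))
        = φ * (Real.sqrt N : ℂ) *
            ζ ^ (((m : ℤ) + 1) * ((j.val : ℤ) ^ 2 - ((i.val : ℤ) + (j.val : ℤ)) ^ 2)) := by
  obtain ⟨m', hm'⟩ := hNodd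
  obtain rfl : m = m' := by omega
  clear hm
  subst hm'
  have hφ' : φ = (-Complex.I) ^ m := hφ.trans (phase_eq m)
  have hG := gauss_sum_half m ζ hζ
  have hprim : IsPrimitiveRoot ζ (2 * m + 1) := hζ ▸ Complex.isPrimitiveRoot_exp _ (by omega)
  have hz0 : ζ ≠ 0 := hprim.ne_zero (by omega)
  have hzp : ∀ a : ℤ, ζ ^ (((2 * m + 1 : ℕ) : ℤ) * a) = 1 := fun a => by
    rw [zpow_mul, zpow_natCast, hprim.pow_eq_one, one_zpow]
  rw [← hφ'] at hG
  have hsq : ((Real.sqrt ((2 * m + 1 : ℕ) : ℝ) : ℝ) : ℂ) ≠ 0 := by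
    rw [Complex.ofReal_ne_zero]
    positivity
  -- Complete the square, using `2 (m + 1) ≡ 1 mod N`, and translate by `i + j`.
  have hsum : ∀ i j : Fin (2 * m + 1), (∑ k : Fin (2 * m + 1),
          ζ ^ (-((k.val : ℤ) * ((i.val : ℤ) + (j.val : ℤ)))
                + ((m : ℤ) + 1) * ((k.val : ℤ) ^ 2 + (j.val : ℤ) ^ 2)))
        = φ * (Real.sqrt ((2 * m + 1 : ℕ) : ℝ) : ℂ) *
            ζ ^ (((m : ℤ) + 1) * ((j.val : ℤ) ^ 2 - ((i.val : ℤ) + (j.val : ℤ)) ^ 2)) := by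
    intro i j
    set s := i.val + j.val with hs
    have hs' : (i.val : ℤ) + (j.val : ℤ) = s := by rw [hs]; push_cast; ring
    rw [hs', Fin.sum_univ_eq_sum_range (fun k => ζ ^ (-((k : ℤ) * (s : ℤ))
                + ((m : ℤ) + 1) * ((k : ℤ) ^ 2 + (j.val : ℤ) ^ 2))), ← hG,
      mul_comm (Finset.sum _ _),
      Finset.mul_sum, ← sum_range_shift (fun k : ℕ => ζ ^ (-((k : ℤ) * (s : ℤ))
                + ((m : ℤ) + 1) * ((k : ℤ) ^ 2 + (j.val : ℤ) ^ 2))) _ s]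
    · refine Finset.sum_congr rfl fun k _ => ?_
      rw [← zpow_natCast ζ ((m + 1) * k ^ 2), ← zpow_add₀ hz0, ← mul_one (ζ ^ (_ + ((_ : ℕ) : ℤ))),
        ← hzp (s * (k + s)), ← zpow_add₀ hz0]
      congr 1
      push_cast
      ring
    · intro k
      rw [← mul_one (ζ ^ (-((k : ℤ) * s) + _)),
        ← hzp (-s + (m + 1) * (2 * k + (2 * m + 1 : ℕ))), ← zpow_add₀ hz0]
      congr 1
      push_cast
      ring
  intro i j
  refine ⟨?_, hsum i j⟩
  have hST : ∀ a b : Fin (2 * m + 1), (S * T) a b = ((Real.sqrt ((2 * m + 1 : ℕ) : ℝ) : ℂ))⁻¹ *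
      ζ ^ (-((a.val : ℤ) * b.val) + ((m : ℤ) + 1) * (b.val : ℤ) ^ 2) := by
    intro a b
    -- Only the index `c ≡ -b` contributes.
    set c : Fin (2 * m + 1) := ⟨(2 * m + 1 - b.val) % (2 * m + 1), Nat.mod_lt _ (by omega)⟩ with hc
    have hcb : (c.val + b.val) % (2 * m + 1) = 0 := by
      rw [hc, Nat.mod_add_mod, Nat.sub_add_cancel b.isLt.le, Nat.mod_self]
    rw [Matrix.mul_apply, Finset.sum_eq_single c]
    · rw [hS, hT, if_pos hcb, mul_one, mul_assoc, ← pow_add]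
      obtain ⟨t, ht⟩ := Nat.dvd_of_mod_eq_zero hcb
      have ht' : (c.val : ℤ) = ((2 * m + 1 : ℕ) : ℤ) * t - b.val := by
        rw [eq_sub_iff_add_eq]
        exact_mod_cast ht
      congr 1
      rw [← zpow_natCast, ← mul_one (ζ ^ (-_ + _)),
        ← hzp (a.val * t + (m + 1) * t * (c.val - b.val)), ← zpow_add₀ hz0]
      congr 1
      push_cast at ht' ⊢
      rw [ht']
      ring
    · intro k _ hkc
      rw [hT, if_neg, mul_zero, mul_zero]
      intro h0
      apply hkc
      have hmod : k.val + b.val ≡ c.val + b.val [MOD 2 * m + 1] := h0.trans hcb.symm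
      exact Fin.ext ((Nat.ModEq.add_right_cancel' _ hmod).eq_of_lt_of_lt k.isLt c.isLt)
    · simp
  rw [pow_two, Matrix.mul_apply]
  have hk : ∀ k : Fin (2 * m + 1), (S * T) i k * (S * T) k j
      = (((Real.sqrt ((2 * m + 1 : ℕ) : ℝ) : ℂ))⁻¹) ^ 2 *
        ζ ^ (-((k.val : ℤ) * ((i.val : ℤ) + (j.val : ℤ)))
                + ((m : ℤ) + 1) * ((k.val : ℤ) ^ 2 + (j.val : ℤ) ^ 2)) := by
    intro k
    rw [hST, hST, mul_mul_mul_comm, ← zpow_add₀ hz0, ← pow_two]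
    congr 2
    ring
  rw [Finset.sum_congr rfl fun k _ => hk k, ← Finset.mul_sum, hsum]
  have he : ζ ^ (((m : ℤ) + 1) * ((j.val : ℤ) ^ 2 - ((i.val : ℤ) + (j.val : ℤ)) ^ 2))
      = ζ ^ (-((((m : ℤ) + 1) * (i.val : ℤ) ^ 2 + (i.val : ℤ) * (j.val : ℤ)))) := by
    rw [← mul_one (ζ ^ _), ← hzp (i.val * j.val), ← zpow_add₀ hz0]
    congr 1
    push_cast
    ring
  rw [he]
  field_simp
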